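/- Let n ≥ 4, F a field of characteristic 2, and let S_F be the Specht F𝔖_n-module for (n−2,1,1) with basis {b(i₁,i₂) : 2 ≤ i₁ < i₂ ≤ n}. Then U₁ = { Σ β(i₁,i₂) b(i₁,i₂) : Σ β(i₁,i₂) = 0 } is an F𝔖_n-submodule of codimension 1 in S_F. Moreover, if n is odd, then U₂ = F·(Σ_{2≤i₁<i₂≤n} b(i₁,i₂)) is a trivial F𝔖_n-submodule of S_F. -/

import Mathlib

open Finset

noncomputable section

/-- The `R`-linear map `⋀^k(f)` induced by `f`. -/
def exteriorPowerMap {R M N : Type*} [CommRing R] [AddCommGroup M] [Module R M]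
    [AddCommGroup N] [Module R N] (k : ℕ) (f : M →ₗ[R] N) : ⋀[R]^k M →ₗ[R] ⋀[R]^k N :=
  LinearMap.restrict (ExteriorAlgebra.map f).toLinearMap (p := ⋀[R]^k M) (q := ⋀[R]^k N)
    (fun x hx => by
      have h1 : Submodule.map (ExteriorAlgebra.map f).toLinearMap (⋀[R]^k M) ≤ ⋀[R]^k N := by
        rw [Submodule.map_pow]
        refine pow_le_pow_left' ?_ k
        rw [ExteriorAlgebra.ι_range_map_map]
        exact LinearMap.map_le_range
      exact h1 (Submodule.mem_map_of_mem hx))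

/-- The wedge `x ∧ y` in `⋀^2(M)`. -/
def wedgePair {R M : Type*} [CommRing R] [AddCommGroup M] [Module R M]
    (x y : M) : ⋀[R]^2 M :=
  ⟨ExteriorAlgebra.ιMulti R 2 ![x, y],
    ExteriorAlgebra.ιMulti_range R 2 (Set.mem_range_self _)⟩

variable (R : Type*) [CommRing R] (n : ℕ)

/-- The coefficient-sum functional on the natural permutation module. -/
def sumFunctional : (Fin n → R) →ₗ[R] R := ∑ i, LinearMap.proj i

/-- The natural Specht lattice `S^{(n-1,1)}`, realized as the kernel of the coefficient-sum
functional on the natural permutation module. -/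
def spechtW : Submodule R (Fin n → R) := LinearMap.ker (sumFunctional R n)

/-- The standard basis vector `e(1,i) = b_i − b_1` of the natural Specht lattice
(with `0`-based indices, index `0` playing the role of `1`). -/
def spechtE (h0 : 0 < n) (i : Fin n) : ↥(spechtW R n) :=
  ⟨Pi.single i 1 - Pi.single (⟨0, h0⟩ : Fin n) 1, by
    simp [spechtW, sumFunctional, LinearMap.mem_ker, Finset.sum_sub_distrib,
      Finset.sum_pi_single']⟩

/-- The action of `σ ∈ 𝔖_n` on the natural Specht lattice. -/
def spechtPerm (σ : Equiv.Perm (Fin n)) : ↥(spechtW R n) →ₗ[R] ↥(spechtW R n) :=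
  LinearMap.restrict (LinearMap.funLeft R R ⇑σ⁻¹)
    (fun x hx => by
      simp only [spechtW, LinearMap.mem_ker, sumFunctional, LinearMap.sum_apply,
        LinearMap.proj_apply, LinearMap.funLeft_apply] at hx ⊢
      rw [Equiv.sum_comp σ⁻¹ x]
      exact hx)

/-- The standard basis vector `b(i,j) = e(1,i) ∧ e(1,j)` of the Specht lattice
`S^{(n-2,1,1)} = ⋀²(S^{(n-1,1)})`. -/
def spechtBB (h0 : 0 < n) (i j : Fin n) : ⋀[R]^2 ↥(spechtW R n) :=
  wedgePair (spechtE R n h0 i) (spechtE R n h0 j)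

/-- The index set `{(i₁,i₂) : 2 ≤ i₁ < i₂ ≤ n}` of the standard basis of `S^{(n-2,1,1)}`
(`0`-based indices). -/
def PairIdx := {q : Fin n × Fin n // 0 < q.1.val ∧ q.1.val < q.2.val}

instance : Fintype (PairIdx n) := by unfold PairIdx; infer_instance
instance : DecidableEq (PairIdx n) := by unfold PairIdx; infer_instance

/-- The pair `(n-1, n)` (in `0`-based indices: `(n-2, n-1)`). -/
def pairMax (hn : 4 ≤ n) : PairIdx n :=
  ⟨(⟨n - 2, by omega⟩, ⟨n - 1, by omega⟩), ⟨show 0 < n - 2 by omega, show n - 2 < n - 1 by omega⟩⟩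

section Helpers

/-- Linear functional on `⋀²` induced by an alternating bilinear map. -/
def altLift {K M N : Type*} [CommRing K] [AddCommGroup M] [Module K M]
    [AddCommGroup N] [Module K N] (B : M →ₗ[K] M →ₗ[K] N) (hB : ∀ x, B x x = 0) :
    ⋀[K]^2 M →ₗ[K] N :=
  exteriorPower.alternatingMapLinearEquiv
    { toFun := fun v => B (v 0) (v 1)
      map_update_add' := by
        intro _ m i x y
        fin_cases i <;> simp [Function.update]
      map_update_smul' := by
        intro _ m i c x
        fin_cases i <;> simp [Function.update]
      map_eq_zero_of_eq' := by
        intro v i j h hij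
        have h01 : v 0 = v 1 := by
          fin_cases i <;> fin_cases j <;> simp_all
        simp [h01, hB] }

theorem altLift_wedgePair {K M N : Type*} [CommRing K] [AddCommGroup M] [Module K M]
    [AddCommGroup N] [Module K N] (B : M →ₗ[K] M →ₗ[K] N) (hB : ∀ x, B x x = 0) (x y : M) :
    altLift B hB (wedgePair x y) = B x y := by
  have h : (wedgePair x y : ⋀[K]^2 M) = exteriorPower.ιMulti K 2 ![x, y] := rfl
  rw [h, altLift, exteriorPower.alternatingMapLinearEquiv_apply_ιMulti]
  simp

theorem wedgePair_coe {K M : Type*} [CommRing K] [AddCommGroup M] [Module K M] (x y : M) :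
    ((wedgePair x y : ⋀[K]^2 M) : ExteriorAlgebra K M) =
      ExteriorAlgebra.ι K x * ExteriorAlgebra.ι K y := by
  simp [wedgePair, ExteriorAlgebra.ιMulti_apply]

/-- The wedge as a bilinear map. -/
def wedgeBil (K M : Type*) [CommRing K] [AddCommGroup M] [Module K M] :
    M →ₗ[K] M →ₗ[K] ⋀[K]^2 M :=
  LinearMap.mk₂ K (fun x y => wedgePair x y)
    (by intro x y z; apply Subtype.ext; simp [wedgePair_coe, add_mul])
    (by intro c x z; apply Subtype.ext; simp [wedgePair_coe])
    (by intro x y z; apply Subtype.ext; simp [wedgePair_coe, mul_add])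
    (by intro c x z; apply Subtype.ext; simp [wedgePair_coe])

theorem wedgeBil_apply {K M : Type*} [CommRing K] [AddCommGroup M] [Module K M] (x y : M) :
    wedgeBil K M x y = wedgePair x y := rfl

theorem wedgeBil_self {K M : Type*} [CommRing K] [AddCommGroup M] [Module K M] (x : M) :
    wedgeBil K M x x = 0 :=
  (exteriorPower.ιMulti K 2 (M := M)).map_eq_zero_of_eq ![x, x] (i := 0) (j := 1) rfl (by simp)

theorem wedgeBil_swap {K M : Type*} [CommRing K] [AddCommGroup M] [Module K M] (x y : M) :
    wedgeBil K M x y = - wedgeBil K M y x := by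
  have h := wedgeBil_self (K := K) (x + y)
  simp only [map_add, LinearMap.add_apply, wedgeBil_self] at h
  rw [eq_neg_iff_add_eq_zero]
  simpa [add_comm] using h

theorem wedge_span (K M : Type*) [CommRing K] [AddCommGroup M] [Module K M]
    (P : Submodule K (⋀[K]^2 M)) (h : ∀ x y, wedgeBil K M x y ∈ P) : P = ⊤ := by
  rw [eq_top_iff, ← exteriorPower.ιMulti_span, Submodule.span_le]
  rintro _ ⟨v, rfl⟩
  have : v = ![v 0, v 1] := by ext i; fin_cases i <;> rfl
  rw [this]
  exact h _ _

theorem extMap_wedge {K M N : Type*} [CommRing K] [AddCommGroup M] [Module K M]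
    [AddCommGroup N] [Module K N] (f : M →ₗ[K] N) (x y : M) :
    exteriorPowerMap 2 f (wedgeBil K M x y) = wedgeBil K N (f x) (f y) := by
  apply Subtype.ext
  change ExteriorAlgebra.map f (ExteriorAlgebra.ιMulti K 2 ![x, y]) =
    ExteriorAlgebra.ιMulti K 2 ![f x, f y]
  rw [ExteriorAlgebra.map_apply_ιMulti]
  congr 1
  ext i; fin_cases i <;> rfl

/-- Dot product on the Specht lattice. -/
def dotBil (K : Type*) [CommRing K] (m : ℕ) :
    ↥(spechtW K m) →ₗ[K] ↥(spechtW K m) →ₗ[K] K :=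
  LinearMap.mk₂ K (fun x y => ∑ i, x.1 i * y.1 i)
    (by intro x y z; simp [add_mul, Finset.sum_add_distrib])
    (by intro c x z; simp [Finset.mul_sum, mul_assoc])
    (by intro x y z; simp [mul_add, Finset.sum_add_distrib])
    (by intro c x z; simp [Finset.mul_sum, mul_left_comm])

theorem spechtW_sum {K : Type*} [CommRing K] {m : ℕ} (x : ↥(spechtW K m)) :
    ∑ i, x.1 i = 0 := by
  have := x.2
  simpa [spechtW, sumFunctional, LinearMap.mem_ker] using this

theorem dotBil_self (K : Type*) [CommRing K] [CharP K 2] (m : ℕ) (x : ↥(spechtW K m)) :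
    dotBil K m x x = 0 := by
  have h : dotBil K m x x = ∑ i, x.1 i ^ 2 := by
    simp [dotBil, sq]
  have h2 := spechtW_sum x
  rw [h, ← CharTwo.sum_sq, h2]
  simp

/-- The two-by-two minor with rows `a`, `b`. -/
def minorBil (K : Type*) [CommRing K] (m : ℕ) (a b : Fin m) :
    ↥(spechtW K m) →ₗ[K] ↥(spechtW K m) →ₗ[K] K :=
  LinearMap.mk₂ K (fun x y => x.1 a * y.1 b - x.1 b * y.1 a)
    (by intro x y z; simp; ring)
    (by intro c x z; simp; ring)
    (by intro x y z; simp; ring)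
    (by intro c x z; simp; ring)

theorem spechtE_zero (K : Type*) [CommRing K] (m : ℕ) (h0 : 0 < m) :
    spechtE K m h0 ⟨0, h0⟩ = 0 := by
  apply Subtype.ext; simp [spechtE]

theorem spechtW_expand {K : Type*} [CommRing K] {m : ℕ} (h0 : 0 < m) (x : ↥(spechtW K m)) :
    x = ∑ i, x.1 i • spechtE K m h0 i := by
  apply Subtype.ext
  ext j
  have h := spechtW_sum x
  simp [spechtE, Finset.sum_apply, mul_sub, Finset.sum_sub_distrib, ← Finset.sum_mul, h,
    Pi.single_apply]

theorem spechtPerm_E (K : Type*) [CommRing K] (m : ℕ) (h0 : 0 < m) (σ : Equiv.Perm (Fin m))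
    (i : Fin m) : spechtPerm K m σ (spechtE K m h0 i) =
      spechtE K m h0 (σ i) - spechtE K m h0 (σ ⟨0, h0⟩) := by
  apply Subtype.ext
  ext j
  simp [spechtE, spechtPerm, LinearMap.coe_restrict_apply, LinearMap.funLeft_apply,
    Pi.single_apply, Equiv.Perm.inv_eq_iff_eq, Equiv.symm_apply_eq]

theorem dotBil_perm (K : Type*) [CommRing K] (m : ℕ) (σ : Equiv.Perm (Fin m))
    (x y : ↥(spechtW K m)) :
    dotBil K m (spechtPerm K m σ x) (spechtPerm K m σ y) = dotBil K m x y := by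
  simp only [dotBil, LinearMap.mk₂_apply, spechtPerm, LinearMap.coe_restrict_apply,
    LinearMap.funLeft_apply]
  exact Equiv.sum_comp σ⁻¹ (fun i => x.1 i * y.1 i)

theorem dotBil_E (K : Type*) [CommRing K] (m : ℕ) (h0 : 0 < m) (q : PairIdx m) :
    dotBil K m (spechtE K m h0 q.1.1) (spechtE K m h0 q.1.2) = 1 := by
  obtain ⟨⟨i, j⟩, hi, hj⟩ := q
  have h1 : i ≠ ⟨0, h0⟩ := by rintro rfl; simp at hi
  have h2 : j ≠ ⟨0, h0⟩ := by rintro rfl; simp at hj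
  have h3 : i ≠ j := by rintro rfl; simp at hj
  simp [dotBil, spechtE, sub_mul, mul_sub, Finset.sum_sub_distrib, Pi.single_apply, h1, h2, h3,
    h1.symm, h2.symm, h3.symm]

theorem spechtBB_span (K : Type*) [CommRing K] (m : ℕ) (h0 : 0 < m) :
    Submodule.span K (Set.range fun q : PairIdx m => spechtBB K m h0 q.1.1 q.1.2) = ⊤ := by
  apply wedge_span
  have key : ∀ i j, wedgeBil K _ (spechtE K m h0 i) (spechtE K m h0 j) ∈
      Submodule.span K (Set.range fun q : PairIdx m => spechtBB K m h0 q.1.1 q.1.2) := by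
    intro i j
    by_cases hi : i.val = 0
    · have : i = ⟨0, h0⟩ := Fin.ext hi
      rw [this, spechtE_zero]; simp
    by_cases hj : j.val = 0
    · have : j = ⟨0, h0⟩ := Fin.ext hj
      rw [this, spechtE_zero]; simp
    rcases lt_trichotomy i.val j.val with h | h | h
    · exact Submodule.subset_span ⟨⟨(i, j), by simp; omega, h⟩, rfl⟩
    · rw [Fin.ext h, wedgeBil_self]; simp
    · rw [wedgeBil_swap]
      exact Submodule.neg_mem _ (Submodule.subset_span ⟨⟨(j, i), by simp; omega, h⟩, rfl⟩)
  intro x y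
  rw [spechtW_expand h0 x, spechtW_expand h0 y]
  simp only [map_sum, map_smul, LinearMap.sum_apply, LinearMap.smul_apply]
  refine Submodule.sum_mem _ fun i _ => Submodule.smul_mem _ _ <|
    Submodule.sum_mem _ fun j _ => Submodule.smul_mem _ _ <| key _ _

theorem sum_lt_perm {A : Type*} [AddCommMonoid A] {m : ℕ} (f : Fin m → Fin m → A)
    (hf : ∀ i j, f i j = f j i) (σ : Equiv.Perm (Fin m)) :
    ∑ p : Fin m × Fin m with p.1 < p.2, f (σ p.1) (σ p.2) =
      ∑ p : Fin m × Fin m with p.1 < p.2, f p.1 p.2 := by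
  have aux : ∀ (τ : Equiv.Perm (Fin m)) (a b : Fin m), a < b →
      (min (τ a) (τ b) < max (τ a) (τ b)) := by
    intro τ a b h
    rcases lt_trichotomy (τ a) (τ b) with h1 | h1 | h1
    · simp [h1]
    · exact absurd (τ.injective h1) h.ne
    · simp [h1]
  refine Finset.sum_nbij' (fun p => (min (σ p.1) (σ p.2), max (σ p.1) (σ p.2)))
    (fun p => (min (σ.symm p.1) (σ.symm p.2), max (σ.symm p.1) (σ.symm p.2))) ?_ ?_ ?_ ?_ ?_
  · rintro ⟨a, b⟩ h
    simp only [Finset.mem_filter, Finset.mem_univ, true_and] at h ⊢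
    exact aux σ a b h
  · rintro ⟨a, b⟩ h
    simp only [Finset.mem_filter, Finset.mem_univ, true_and] at h ⊢
    exact aux σ.symm a b h
  · rintro ⟨a, b⟩ h
    simp only [Finset.mem_filter, Finset.mem_univ, true_and] at h ⊢
    rcases le_total (σ a) (σ b) with h1 | h1 <;> simp [h1, h.le]
  · rintro ⟨a, b⟩ h
    simp only [Finset.mem_filter, Finset.mem_univ, true_and] at h ⊢
    rcases le_total (σ.symm a) (σ.symm b) with h1 | h1 <;> simp [h1, h.le]
  · rintro ⟨a, b⟩ h
    rcases le_total (σ a) (σ b) with h1 | h1 <;> simp [h1]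
    exact hf _ _

theorem sum_lt_add {A : Type*} [AddCommGroup A] {m : ℕ} (g : Fin m → A) :
    ∑ p : Fin m × Fin m with p.1 < p.2, (g p.1 + g p.2) = (m - 1) • ∑ i, g i := by
  have h1 : ∑ p : Fin m × Fin m with p.1 < p.2, g p.2 =
      ∑ p : Fin m × Fin m with p.2 < p.1, g p.1 :=
    Finset.sum_nbij' Prod.swap Prod.swap (by simp) (by simp) (by simp) (by simp) (by simp)
  rw [Finset.sum_add_distrib, h1, Finset.sum_filter, Finset.sum_filter,
    ← Finset.sum_add_distrib, Fintype.sum_prod_type, Finset.smul_sum]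
  refine Finset.sum_congr rfl fun i _ => ?_
  have : ∀ j : Fin m, ((if i < j then g i else 0) + (if j < i then g i else 0)) =
      if j ≠ i then g i else 0 := by
    intro j
    rcases lt_trichotomy i j with h | h | h
    · simp [h, h.not_gt, h.ne']
    · simp [h]
    · simp [h, h.not_gt, h.ne]
  simp only [this]
  rw [← Finset.sum_filter, Finset.sum_const, Finset.filter_ne', Finset.card_erase_of_mem (by simp)]
  simp

theorem sum_pairIdx (K : Type*) [CommRing K] (m : ℕ) (h0 : 0 < m) :
    ∑ q : PairIdx m, spechtBB K m h0 q.1.1 q.1.2 =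
      ∑ p : Fin m × Fin m with p.1 < p.2,
        wedgeBil K _ (spechtE K m h0 p.1) (spechtE K m h0 p.2) := by
  have h2 : ∑ q : PairIdx m, spechtBB K m h0 q.1.1 q.1.2 =
      ∑ p : Fin m × Fin m with (0 < p.1.val ∧ p.1.val < p.2.val),
        wedgeBil K _ (spechtE K m h0 p.1) (spechtE K m h0 p.2) := by
    symm
    exact Finset.sum_subtype _ (by simp)
      (fun p : Fin m × Fin m => wedgeBil K _ (spechtE K m h0 p.1) (spechtE K m h0 p.2))
  rw [h2]
  apply Finset.sum_subset
  · rintro ⟨a, b⟩ h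
    simp only [Finset.mem_filter, Finset.mem_univ, true_and] at h ⊢
    exact h.2
  · rintro ⟨a, b⟩ h h'
    simp only [Finset.mem_filter, Finset.mem_univ, true_and, not_and] at h h' ⊢
    have : a = ⟨0, h0⟩ := by
      apply Fin.ext
      by_contra hne
      exact h' (Nat.pos_of_ne_zero hne) h
    rw [this, spechtE_zero]; simp

set_option maxHeartbeats 2000000 in
theorem sum_fixed (K : Type*) [Field K] [CharP K 2] (m : ℕ) (h0 : 0 < m) (hm : Odd m)
    (σ : Equiv.Perm (Fin m)) :
    exteriorPowerMap 2 (spechtPerm K m σ) (∑ q : PairIdx m, spechtBB K m h0 q.1.1 q.1.2) =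
      ∑ q : PairIdx m, spechtBB K m h0 q.1.1 q.1.2 := by
  have hneg : ∀ x : ⋀[K]^2 ↥(spechtW K m), -x = x := by
    intro x
    have h2 : (1 + 1 : K) • x = 0 := by
      rw [CharTwo.add_self_eq_zero, zero_smul]
    rw [add_smul, one_smul] at h2
    exact neg_eq_of_add_eq_zero_left h2
  rw [sum_pairIdx, map_sum]
  simp only [extMap_wedge, spechtPerm_E]
  set z := spechtE K m h0 (σ ⟨0, h0⟩)
  have step : ∀ p : Fin m × Fin m,
      wedgeBil K _ (spechtE K m h0 (σ p.1) - z) (spechtE K m h0 (σ p.2) - z) =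
      wedgeBil K _ (spechtE K m h0 (σ p.1)) (spechtE K m h0 (σ p.2)) +
      ((wedgeBil K _ z (spechtE K m h0 (σ p.1))) + (wedgeBil K _ z (spechtE K m h0 (σ p.2)))) := by
    intro p
    simp only [map_sub, LinearMap.sub_apply, wedgeBil_self, sub_zero]
    rw [wedgeBil_swap (spechtE K m h0 (σ p.1)) z]
    have h4 := hneg (wedgeBil K _ z (spechtE K m h0 (σ p.2)))
    generalize wedgeBil K _ z (spechtE K m h0 (σ p.2)) = b at h4 ⊢
    generalize wedgeBil K _ z (spechtE K m h0 (σ p.1)) = a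
    generalize wedgeBil K _ (spechtE K m h0 (σ p.1)) (spechtE K m h0 (σ p.2)) = c
    rw [sub_eq_add_neg, sub_eq_add_neg, neg_neg, h4, add_assoc, add_comm b a]
  simp only [step]
  rw [Finset.sum_add_distrib,
    sum_lt_perm (fun i j => wedgeBil K _ (spechtE K m h0 i) (spechtE K m h0 j))
      (fun i j => by rw [wedgeBil_swap, hneg]) σ,
    sum_lt_add (fun i => wedgeBil K _ z (spechtE K m h0 (σ i)))]
  have h5 : ((m - 1 : ℕ) : K) = 0 := by
    obtain ⟨k, hk⟩ := hm
    rw [hk]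
    simp [CharTwo.two_eq_zero]
  rw [← Nat.cast_smul_eq_nsmul K, h5, zero_smul, add_zero]

end Helpers

set_option synthInstance.maxHeartbeats 1000000 in
set_option maxHeartbeats 1000000 in
/-- Let `n ≥ 4`, `F` a field of characteristic `2`, and let
`S_F = S^{(n-2,1,1)}_F = ⋀²(S^{(n-1,1)}_F)` be the Specht `F𝔖_n`-module with basis
`{b(i₁,i₂) : 2 ≤ i₁ < i₂ ≤ n}`.  Then `U₁ = {Σ β(i₁,i₂)·b(i₁,i₂) : Σ β(i₁,i₂) = 0}` is an
`F𝔖_n`-submodule of codimension `1` in `S_F`.  Moreover, if `n` is odd, then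
`U₂ = F·(Σ b(i₁,i₂))` is a (nonzero) trivial `F𝔖_n`-submodule of `S_F`. -/
theorem specht_submodule_U1_U2 (F : Type*) [Field F] [CharP F 2] (n : ℕ) (hn : 4 ≤ n) :
    (∃ U₁ : Submodule F (⋀[F]^2 ↥(spechtW F n)),
      (U₁ : Set (⋀[F]^2 ↥(spechtW F n))) =
        {x | ∃ β : PairIdx n → F,
          x = ∑ q : PairIdx n, β q • spechtBB F n (by omega) q.1.1 q.1.2 ∧
          (∑ q : PairIdx n, β q) = 0} ∧
      (∀ (σ : Equiv.Perm (Fin n)), ∀ x ∈ U₁,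
        exteriorPowerMap 2 (spechtPerm F n σ) x ∈ U₁) ∧
      Module.finrank F ((⋀[F]^2 ↥(spechtW F n)) ⧸ U₁) = 1) ∧
    (Odd n →
      Submodule.span F {∑ q : PairIdx n, spechtBB F n (by omega) q.1.1 q.1.2} ≠ ⊥ ∧
      ∀ (σ : Equiv.Perm (Fin n)), ∀ x ∈ Submodule.span F
          ({∑ q : PairIdx n, spechtBB F n (by omega) q.1.1 q.1.2} :
            Set (⋀[F]^2 ↥(spechtW F n))),
        exteriorPowerMap 2 (spechtPerm F n σ) x = x) := by
  have h0 : 0 < n := by omega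
  have hφ : ∀ q : PairIdx n, altLift (dotBil F n) (dotBil_self F n)
      (spechtBB F n h0 q.1.1 q.1.2) = 1 := by
    intro q
    rw [spechtBB, altLift_wedgePair, dotBil_E]
  have hinv : ∀ (σ : Equiv.Perm (Fin n)) x, altLift (dotBil F n) (dotBil_self F n)
      (exteriorPowerMap 2 (spechtPerm F n σ) x) = altLift (dotBil F n) (dotBil_self F n) x := by
    intro σ x
    have := wedge_span F ↥(spechtW F n) (LinearMap.eqLocus
      (altLift (dotBil F n) (dotBil_self F n) ∘ₗ exteriorPowerMap 2 (spechtPerm F n σ))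
      (altLift (dotBil F n) (dotBil_self F n))) (by
        intro x y
        rw [LinearMap.mem_eqLocus, LinearMap.comp_apply, extMap_wedge, wedgeBil_apply,
          wedgeBil_apply, altLift_wedgePair, altLift_wedgePair, dotBil_perm])
    have hx : x ∈ (⊤ : Submodule F (⋀[F]^2 ↥(spechtW F n))) := Submodule.mem_top
    rw [← this] at hx
    exact hx
  refine ⟨⟨LinearMap.ker (altLift (dotBil F n) (dotBil_self F n)), ?_, ?_, ?_⟩, ?_⟩
  · ext x
    simp only [SetLike.mem_coe, LinearMap.mem_ker, Set.mem_setOf_eq]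
    constructor
    · intro hx
      have hx' : x ∈ (⊤ : Submodule F (⋀[F]^2 ↥(spechtW F n))) := Submodule.mem_top
      rw [← spechtBB_span F n h0, Submodule.mem_span_range_iff_exists_fun] at hx'
      obtain ⟨β, rfl⟩ := hx'
      refine ⟨β, rfl, ?_⟩
      simpa [map_sum, hφ] using hx
    · rintro ⟨β, rfl, hβ⟩
      simpa [map_sum, hφ] using hβ
  · intro σ x hx
    rw [LinearMap.mem_ker] at hx ⊢
    rw [hinv, hx]
  · have hsurj : Function.Surjective (altLift (dotBil F n) (dotBil_self F n)) := by
      intro c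
      refine ⟨c • spechtBB F n h0 (pairMax n hn).1.1 (pairMax n hn).1.2, ?_⟩
      rw [map_smul, hφ]; simp
    rw [LinearEquiv.finrank_eq (LinearMap.quotKerEquivOfSurjective _ hsurj)]
    exact Module.finrank_self F
  · intro hodd
    refine ⟨?_, ?_⟩
    · rw [Ne, Submodule.span_singleton_eq_bot]
      intro h
      have h3 := congrArg (altLift (minorBil F n ⟨n - 2, by omega⟩ ⟨n - 1, by omega⟩)
        (by intro x; simp [minorBil, mul_comm])) h
      rw [map_sum, map_zero, Finset.sum_eq_single (pairMax n hn)] at h3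
      · rw [spechtBB, altLift_wedgePair] at h3
        have e1 : n - 2 ≠ 0 := by omega
        have e2 : n - 1 ≠ 0 := by omega
        have e3 : n - 2 ≠ n - 1 := by omega
        simp [minorBil, pairMax, spechtE, Pi.single_apply, e1, e2, e3, e3.symm] at h3
      · rintro ⟨⟨⟨i, hi⟩, ⟨j, hj⟩⟩, h1, h2⟩ - hne
        rw [spechtBB, altLift_wedgePair]
        have e1 : n - 2 ≠ 0 := by omega
        have e2 : n - 1 ≠ 0 := by omega
        have e4 : ¬ (i = n - 2 ∧ j = n - 1) := by
          rintro ⟨rfl, rfl⟩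
          exact hne rfl
        simp only at h1 h2
        have e5 : n - 1 ≠ i := by omega
        have e6 : ¬ (n - 2 = i ∧ n - 1 = j) := by omega
        simp only [minorBil, spechtE, LinearMap.mk₂_apply, Pi.sub_apply, Pi.single_apply,
          Fin.mk.injEq, e1, e2, e5, if_false, sub_zero, zero_mul]
        by_cases h7 : n - 2 = i <;> by_cases h8 : n - 1 = j <;> simp_all
      · simp
    · intro σ x hx
      obtain ⟨c, rfl⟩ := Submodule.mem_span_singleton.mp hx
      rw [map_smul, sum_fixed F n h0 hodd]

end
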